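/- Let r ≥ 5 and e ≥ 3r+30. In r variables, let F have exponent vector (r+10, r+10, e-2r-20, 0, …, 0) and let G have exponent vector (e-r-8, 4, 4, 4, 1, …, 1) (exponent 1 in each of the variables x_5, …, x_r). Let h(i) be the number of monomials of degree i dividing F or G. Then h(e-r-10) = C(r+12,2) + 125·2^{r-4}, h(e-r-9) = C(r+11,2) + 125·2^{r-4}, h(e-r-8) = C(r+10,2) + 125·2^{r-4}, and h(e-r-9)^2 < h(e-r-10)·h(e-r-8); in particular h is not log-concave. (This gives an infinite family of non-log-concave pure O-sequences of codimension r and type 2, for every r ≥ 5.) -/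

import Mathlib

/-- `divCountSet M i` is the number of monomials of degree `i` (in `r`
variables) dividing at least one monomial whose exponent vector lies in `M`:
the `i`-th entry of the pure `O`-sequence generated by `M`. -/
noncomputable def divCountSet {r : ℕ} (M : Set (Fin r → ℕ)) (i : ℕ) : ℕ :=
  {b : Fin r → ℕ | (∑ j, b j = i) ∧ ∃ a ∈ M, ∀ j, b j ≤ a j}.ncard

/-!
The two generators have degree `e`, and their common divisors have degree at most `r + 18`, so in
the degrees `e - t` of interest the divisors of `F` and of `G` may be counted separately.

* Complementation `b ↦ F - b` turns the divisors of `F` of degree `e - t` into those of degree `t`,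
  and when `t` is at most each of the three nonzero exponents these are all `C(t + 2, 2)` monomials
  of degree `t` in three variables.
* The exponent of `x₁` in `G` is so large that the other exponents of a divisor of degree `e - t`
  can be chosen freely, which gives `5 ^ 3 * 2 ^ (r - 4)` divisors whatever the value of `t`.

The binomials `C(n, 2)`, `C(n + 1, 2)`, `C(n + 2, 2)` form a log-concave triple, but adding a
constant `N > C(n + 1, 2)` to all three reverses the inequality.
-/

open Finset

theorem card_piAntidiag_eq_multichoose {ι : Type*} [DecidableEq ι] (s : Finset ι) (t : ℕ) :
    #(s.piAntidiag t) = (#s).multichoose t := by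
  rw [← card_finsuppAntidiag_nat_eq_multichoose, finsuppAntidiag, card_map, card_attach]

section Divisors

variable {ι : Type*} [Fintype ι] [DecidableEq ι]

/-- The monomials of degree `d` dividing the monomial with exponent vector `a`. -/
def divisorsOfDegree (a : ι → ℕ) (d : ℕ) : Finset (ι → ℕ) :=
  {b ∈ Iic a | ∑ j, b j = d}

theorem mem_divisorsOfDegree {a b : ι → ℕ} {d : ℕ} :
    b ∈ divisorsOfDegree a d ↔ b ≤ a ∧ ∑ j, b j = d := by
  simp only [divisorsOfDegree, mem_filter, mem_Iic]

theorem sub_mem_divisorsOfDegree {a b : ι → ℕ} {d t : ℕ} (hdt : d + t = ∑ j, a j)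
    (hb : b ∈ divisorsOfDegree a d) : a - b ∈ divisorsOfDegree a t := by
  obtain ⟨hba, hsum⟩ := mem_divisorsOfDegree.mp hb
  refine mem_divisorsOfDegree.mpr ⟨tsub_le_self, ?_⟩
  have hsub : ∑ j, (a - b) j = ∑ j, a j - ∑ j, b j := sum_tsub_distrib univ fun j _ => hba j
  omega

theorem card_divisorsOfDegree_eq_of_add_eq {a : ι → ℕ} {d t : ℕ} (hdt : d + t = ∑ j, a j) :
    #(divisorsOfDegree a d) = #(divisorsOfDegree a t) :=
  card_nbij' (a - ·) (a - ·) (fun _ => sub_mem_divisorsOfDegree hdt)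
    (fun _ => sub_mem_divisorsOfDegree (by rwa [add_comm]))
    (fun _ hb => tsub_tsub_cancel_of_le (mem_divisorsOfDegree.mp hb).1)
    (fun _ hb => tsub_tsub_cancel_of_le (mem_divisorsOfDegree.mp hb).1)

theorem divisorsOfDegree_eq_piAntidiag {a : ι → ℕ} {s : Finset ι} {t : ℕ}
    (hs : ∀ j ∈ s, t ≤ a j) (hs' : ∀ j ∉ s, a j = 0) : divisorsOfDegree a t = s.piAntidiag t := by
  ext b
  rw [mem_divisorsOfDegree, mem_piAntidiag]
  constructor
  · rintro ⟨hba, hsum⟩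
    have hb : ∀ j ∉ s, b j = 0 := fun j hj => Nat.le_zero.mp ((hba j).trans (hs' j hj).le)
    exact ⟨(sum_subset s.subset_univ fun j _ => hb j).trans hsum, fun j => not_imp_comm.mp (hb j)⟩
  · rintro ⟨hsum, hb⟩
    have hb : ∀ j ∉ s, b j = 0 := fun j => not_imp_comm.mp (hb j)
    refine ⟨fun j => ?_, (sum_subset s.subset_univ fun j _ => hb j).symm.trans hsum⟩
    by_cases hj : j ∈ s
    · exact ((single_le_sum_of_canonicallyOrdered hj).trans hsum.le).trans (hs j hj)
    · exact (hb j hj).trans_le (Nat.zero_le _)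

theorem sum_compl_update (b : ι → ℕ) (i : ι) (x : ℕ) :
    ∑ j ∈ {i}ᶜ, Function.update b i x j = ∑ j ∈ {i}ᶜ, b j :=
  sum_update_of_notMem (by simp) b x

theorem card_Iic_update_zero (a : ι → ℕ) (i : ι) :
    #(Iic (Function.update a i 0)) = ∏ j ∈ {i}ᶜ, (a j + 1) := by
  rw [Pi.card_Iic, Fintype.prod_eq_mul_prod_compl i, Function.update_self, Nat.card_Iic, zero_add,
    one_mul]
  refine prod_congr rfl fun j hj => ?_
  rw [Function.update_of_ne (by simpa using hj), Nat.card_Iic]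

theorem card_divisorsOfDegree_eq_prod_compl {a : ι → ℕ} {d : ℕ} (i : ι) (hi : d ≤ a i)
    (ha : ∑ j ∈ {i}ᶜ, a j ≤ d) : #(divisorsOfDegree a d) = ∏ j ∈ {i}ᶜ, (a j + 1) := by
  rw [← card_Iic_update_zero]
  refine card_nbij' (Function.update · i 0)
    (fun c => Function.update c i (d - ∑ j ∈ {i}ᶜ, c j)) ?_ ?_ ?_ ?_
  · intro b hb
    have hba := (mem_divisorsOfDegree.mp hb).1
    exact mem_coe.mpr (mem_Iic.mpr (update_le_update_iff.mpr ⟨le_rfl, fun j _ => hba j⟩))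
  · intro c hc
    obtain ⟨-, hca⟩ := le_update_iff.mp (mem_Iic.mp hc)
    have hcd : ∑ j ∈ {i}ᶜ, c j ≤ d := (sum_le_sum fun j hj => hca j (by simpa using hj)).trans ha
    refine mem_divisorsOfDegree.mpr ⟨update_le_iff.mpr ⟨(Nat.sub_le _ _).trans hi, hca⟩, ?_⟩
    rw [Fintype.sum_eq_add_sum_compl i, sum_compl_update]
    simpa only [Function.update_self] using Nat.sub_add_cancel hcd
  · intro b hb
    have hsum := (mem_divisorsOfDegree.mp hb).2
    rw [Fintype.sum_eq_add_sum_compl i] at hsum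
    simp only [sum_compl_update, Function.update_idem]
    rw [← hsum, Nat.add_sub_cancel, Function.update_eq_self]
  · intro c hc
    have hci : c i = 0 := by simpa using mem_Iic.mp hc i
    simp only [Function.update_idem]
    rw [← hci, Function.update_eq_self]

theorem disjoint_divisorsOfDegree {a b : ι → ℕ} {d : ℕ} (h : ∑ j, min (a j) (b j) < d) :
    Disjoint (divisorsOfDegree a d) (divisorsOfDegree b d) := by
  refine Finset.disjoint_left.mpr fun c hca hcb => h.not_ge ?_
  obtain ⟨hca, hsum⟩ := mem_divisorsOfDegree.mp hca
  exact hsum.ge.trans (sum_le_sum fun j _ => le_min (hca j) ((mem_divisorsOfDegree.mp hcb).1 j))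

end Divisors

theorem divCountSet_pair {r : ℕ} (a b : Fin r → ℕ) (d : ℕ) :
    divCountSet {a, b} d = #(divisorsOfDegree a d ∪ divisorsOfDegree b d) := by
  rw [divCountSet, ← Set.ncard_coe_finset]
  congr 1
  ext c
  simp only [Set.mem_ofPred_eq, Set.mem_insert_iff, Set.mem_singleton_iff, exists_eq_or_imp,
    exists_eq_left, coe_union, Set.mem_union, mem_coe, mem_divisorsOfDegree, Pi.le_def]
  tauto

section Generators

variable {r e d t : ℕ}

/-- The exponent vector of the generator `F = x₁^(r+10) x₂^(r+10) x₃^(e-2r-20)`, which involves only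
three variables. The subtraction is truncated, so this has degree `e` only if `2 * r + 20 ≤ e`. -/
def ternaryGenerator (r e : ℕ) (j : Fin r) : ℕ :=
  if (j : ℕ) = 0 then r + 10 else if (j : ℕ) = 1 then r + 10
    else if (j : ℕ) = 2 then e - 2 * r - 20 else 0

/-- The exponent vector of the generator `G = x₁^(e-r-8) x₂^4 x₃^4 x₄^4 x₅ ⋯ x_r`, which involves
all the variables. The subtraction is truncated, so this has degree `e` only if `r + 8 ≤ e`. -/
def fullGenerator (r e : ℕ) (j : Fin r) : ℕ :=
  if (j : ℕ) = 0 then e - r - 8 else if (j : ℕ) ≤ 3 then 4 else 1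

theorem ternaryGenerator_add_three (m e : ℕ) :
    ternaryGenerator (m + 3) e =
      Fin.cons (m + 13) (Fin.cons (m + 13) (Fin.cons (e - 2 * (m + 3) - 20) fun _ => 0)) :=
  funext (Fin.cases rfl (Fin.cases rfl (Fin.cases rfl fun _ => rfl)))

theorem fullGenerator_add_four (m e : ℕ) :
    fullGenerator (m + 4) e =
      Fin.cons (e - (m + 4) - 8) (Fin.cons 4 (Fin.cons 4 (Fin.cons 4 fun _ => 1))) :=
  funext (Fin.cases rfl (Fin.cases rfl (Fin.cases rfl (Fin.cases rfl fun _ => rfl))))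

theorem sum_ternaryGenerator (hr : 3 ≤ r) (he : 2 * r + 20 ≤ e) :
    ∑ j, ternaryGenerator r e j = e := by
  obtain ⟨m, rfl⟩ := Nat.exists_eq_add_of_le' hr
  simp only [ternaryGenerator_add_three, Fin.sum_cons, sum_const_zero]
  omega

theorem card_divisorsOfDegree_ternaryGenerator (hr : 3 ≤ r) (he : 3 * r + 30 ≤ e)
    (ht : t ≤ r + 10) (hdt : d + t = e) :
    #(divisorsOfDegree (ternaryGenerator r e) d) = (t + 2).choose 2 := by
  let s : Finset (Fin r) := {j | (j : ℕ) < 3}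
  have hs : ∀ j ∈ s, t ≤ ternaryGenerator r e j := fun j hj => by
    have hj : (j : ℕ) < 3 := (mem_filter.mp hj).2
    grind [ternaryGenerator]
  have hs' : ∀ j ∉ s, ternaryGenerator r e j = 0 := fun j hj => by
    have hj : ¬ (j : ℕ) < 3 := by simpa [s] using hj
    grind [ternaryGenerator]
  have hcard : #s = 3 := by simpa [s, Fin.card_filter_val_lt] using hr
  rw [card_divisorsOfDegree_eq_of_add_eq
      (hdt.trans (sum_ternaryGenerator hr (by omega)).symm),
    divisorsOfDegree_eq_piAntidiag hs hs', card_piAntidiag_eq_multichoose, hcard,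
    Nat.multichoose_eq, show 3 + t - 1 = t + 2 by omega, Nat.choose_symm_add]

theorem card_divisorsOfDegree_fullGenerator (hr : 4 ≤ r) (hd : r + 8 ≤ d) (hde : d ≤ e - r - 8) :
    #(divisorsOfDegree (fullGenerator r e) d) = 125 * 2 ^ (r - 4) := by
  obtain ⟨m, rfl⟩ := Nat.exists_eq_add_of_le' hr
  have hsum : ∑ j ∈ {0}ᶜ, fullGenerator (m + 4) e j = m + 12 := by
    rw [← Fin.image_succ_univ, sum_image (Fin.succ_injective _).injOn, fullGenerator_add_four]
    simp only [Fin.cons_succ, Fin.sum_cons, Fin.sum_const, smul_eq_mul]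
    ring
  have hprod : ∏ j ∈ {0}ᶜ, (fullGenerator (m + 4) e j + 1) = 125 * 2 ^ m := by
    rw [← Fin.image_succ_univ, prod_image (Fin.succ_injective _).injOn, fullGenerator_add_four]
    simp only [Fin.cons_succ, Fin.prod_univ_succ, Fin.cons_zero, Fin.prod_const]
    ring
  rw [card_divisorsOfDegree_eq_prod_compl 0 hde (by omega), hprod, Nat.add_sub_cancel]

theorem sum_min_generators_le (hr : 4 ≤ r) :
    ∑ j, min (ternaryGenerator r e j) (fullGenerator r e j) ≤ r + 18 := by
  obtain ⟨m, rfl⟩ := Nat.exists_eq_add_of_le' hr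
  rw [ternaryGenerator_add_three, fullGenerator_add_four]
  simp only [Fin.sum_univ_succ, Fin.cons_zero, Fin.cons_succ, Nat.zero_min, sum_const_zero]
  omega

theorem divCountSet_generators (hr : 4 ≤ r) (he : 3 * r + 30 ≤ e) (ht : r + 8 ≤ t)
    (ht' : t ≤ r + 10) (hdt : d + t = e) :
    divCountSet {ternaryGenerator r e, fullGenerator r e} d =
      (t + 2).choose 2 + 125 * 2 ^ (r - 4) := by
  have hmin : ∑ j, min (ternaryGenerator r e j) (fullGenerator r e j) < d :=
    (sum_min_generators_le hr).trans_lt (by omega)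
  rw [divCountSet_pair, card_union_of_disjoint (disjoint_divisorsOfDegree hmin),
    card_divisorsOfDegree_ternaryGenerator (by omega) he ht' hdt,
    card_divisorsOfDegree_fullGenerator hr (by omega) (by omega)]

end Generators

theorem add_one_choose_two (n : ℕ) : (n + 1).choose 2 = n + n.choose 2 := by
  rw [Nat.choose_succ_succ' n 1, Nat.choose_one_right]

theorem sq_eq_two_mul_choose_two_add (n : ℕ) : n ^ 2 = 2 * n.choose 2 + n := by
  induction n with
  | zero => rfl
  | succ n ih => rw [add_one_choose_two]; linarith

theorem choose_two_add_mul_choose_two_add (n N : ℕ) :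
    ((n + 2).choose 2 + N) * (n.choose 2 + N) + (n + 1).choose 2 =
      ((n + 1).choose 2 + N) ^ 2 + N := by
  rw [add_one_choose_two (n + 1), add_one_choose_two n]
  linear_combination -sq_eq_two_mul_choose_two_add n

theorem choose_two_lt_two_pow (m : ℕ) : (m + 15).choose 2 < 125 * 2 ^ m := by
  induction m with
  | zero => decide
  | succ m ih =>
    have hm : m < 2 ^ m := Nat.lt_two_pow_self
    rw [Nat.add_right_comm, add_one_choose_two, pow_succ]
    omega

theorem stmt_14_general (r e : ℕ) (hr : 4 ≤ r) (he : 3 * r + 30 ≤ e)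
    (F G : Fin r → ℕ)
    (hF : F = fun j : Fin r =>
      if (j : ℕ) = 0 then r + 10 else if (j : ℕ) = 1 then r + 10
        else if (j : ℕ) = 2 then e - 2 * r - 20 else 0)
    (hG : G = fun j : Fin r =>
      if (j : ℕ) = 0 then e - r - 8 else if (j : ℕ) ≤ 3 then 4 else 1) :
    divCountSet {F, G} (e - r - 10) = Nat.choose (r + 12) 2 + 125 * 2 ^ (r - 4) ∧
      divCountSet {F, G} (e - r - 9) = Nat.choose (r + 11) 2 + 125 * 2 ^ (r - 4) ∧
      divCountSet {F, G} (e - r - 8) = Nat.choose (r + 10) 2 + 125 * 2 ^ (r - 4) ∧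
      (divCountSet {F, G} (e - r - 9)) ^ 2 <
        divCountSet {F, G} (e - r - 10) * divCountSet {F, G} (e - r - 8) := by
  obtain rfl : F = ternaryGenerator r e := hF
  obtain rfl : G = fullGenerator r e := hG
  have h₁ : divCountSet _ (e - r - 10) = _ :=
    divCountSet_generators (t := r + 10) hr he (by omega) (by omega) (by omega)
  have h₂ : divCountSet _ (e - r - 9) = _ :=
    divCountSet_generators (t := r + 9) hr he (by omega) (by omega) (by omega)
  have h₃ : divCountSet _ (e - r - 8) = _ :=
    divCountSet_generators (t := r + 8) hr he (by omega) (by omega) (by omega)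
  refine ⟨h₁, h₂, h₃, ?_⟩
  rw [h₁, h₂, h₃]
  have hlarge : (r + 11).choose 2 < 125 * 2 ^ (r - 4) := by
    have h := choose_two_lt_two_pow (r - 4)
    rwa [show r - 4 + 15 = r + 11 by omega] at h
  have hdefect := choose_two_add_mul_choose_two_add (r + 10) (125 * 2 ^ (r - 4))
  linarith

/-- **Non-log-concave pure `O`-sequences of codimension `r ≥ 5` and type 2.**
For `r ≥ 5` and `e ≥ 3r + 30`, let `F = x₁^(r+10) x₂^(r+10) x₃^(e-2r-20)` and
`G = x₁^(e-r-8) x₂^4 x₃^4 x₄^4 x₅ ⋯ x_r`. The pure `O`-sequence `h` generated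
by `F` and `G` satisfies `h (e-r-10) = C(r+12,2) + 125·2^(r-4)`,
`h (e-r-9) = C(r+11,2) + 125·2^(r-4)`, `h (e-r-8) = C(r+10,2) + 125·2^(r-4)`,
and `h (e-r-9)^2 < h (e-r-10) * h (e-r-8)`; in particular `h` is not
log-concave. -/
theorem stmt_14 (r e : ℕ) (hr : 5 ≤ r) (he : 3 * r + 30 ≤ e)
    (F G : Fin r → ℕ)
    (hF : F = fun j : Fin r =>
      if (j : ℕ) = 0 then r + 10 else if (j : ℕ) = 1 then r + 10
        else if (j : ℕ) = 2 then e - 2 * r - 20 else 0)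
    (hG : G = fun j : Fin r =>
      if (j : ℕ) = 0 then e - r - 8 else if (j : ℕ) ≤ 3 then 4 else 1) :
    divCountSet {F, G} (e - r - 10) = Nat.choose (r + 12) 2 + 125 * 2 ^ (r - 4) ∧
      divCountSet {F, G} (e - r - 9) = Nat.choose (r + 11) 2 + 125 * 2 ^ (r - 4) ∧
      divCountSet {F, G} (e - r - 8) = Nat.choose (r + 10) 2 + 125 * 2 ^ (r - 4) ∧
      (divCountSet {F, G} (e - r - 9)) ^ 2 <
        divCountSet {F, G} (e - r - 10) * divCountSet {F, G} (e - r - 8) :=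
  stmt_14_general r e (by omega) he F G hF hG
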